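/- Let G be a finite tree (a connected acyclic simple graph) with at least two vertices, and let v be a vertex of G with degree at most 2. Define the graph G' on the vertex set V(G) \ {v} by: u is adjacent to w in G' if and only if u ≠ w and (u is adjacent to w in G, or both u and w are adjacent to v in G). Then G' is a tree. -/

import Mathlib

/-!
Let `G'` be the Kron reduction of the tree `G` with respect to `v`. Contracting `v` into one of its
neighbors yields a connected subgraph of `G'`, so `G'` is connected. On the other hand, `G'` arises
from the forest `G - v` by adding at most one edge, which joins the two neighbors of `v`. As
`G` is acyclic, these lie in different components of `G - v`, so the additional edge closes no
cycle.
-/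

section KronReduction

open SimpleGraph

variable {V W : Type*} {G : SimpleGraph V} {v : V}

/-- The combinatorial Kron reduction of `G` with respect to the vertex `v`: the graph that remains
after eliminating `v` and joining all of its neighbors pairwise. -/
def kronReduction (G : SimpleGraph V) (v : V) : SimpleGraph {u : V // u ≠ v} where
  Adj u w := u ≠ w ∧ (G.Adj u w ∨ (G.Adj u v ∧ G.Adj w v))
  symm := ⟨fun _ _ h ↦ ⟨h.1.symm, h.2.imp Adj.symm And.symm⟩⟩
  loopless := ⟨fun _ h ↦ h.1 rfl⟩

open Classical in
/-- The retraction of the vertex set that contracts `v` into the vertex `n`. -/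
noncomputable def contractVertex (n : {u : V // u ≠ v}) (u : V) : {u : V // u ≠ v} :=
  if h : u = v then n else ⟨u, h⟩

theorem contractVertex_self (n : {u : V // u ≠ v}) : contractVertex n v = n :=
  dif_pos rfl

theorem contractVertex_coe (n u : {u : V // u ≠ v}) : contractVertex n u = u :=
  dif_neg u.2

theorem contractVertex_surjective (n : {u : V // u ≠ v}) :
    Function.Surjective (contractVertex n) :=
  fun u ↦ ⟨u, contractVertex_coe n u⟩

theorem map_contractVertex_le_kronReduction {n : {u : V // u ≠ v}} (hn : G.Adj n v) :
    G.map (contractVertex n) ≤ kronReduction G v := by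
  rintro _ _ ⟨hne, u, w, huw, rfl, rfl⟩
  refine ⟨hne, ?_⟩
  obtain rfl | hu := eq_or_ne u v
  · lift w to {w : V // w ≠ u} using huw.ne'
    rw [contractVertex_self, contractVertex_coe]
    exact .inr ⟨hn, huw.symm⟩
  obtain rfl | hw := eq_or_ne w v
  · lift u to {u : V // u ≠ w} using hu
    rw [contractVertex_self, contractVertex_coe]
    exact .inr ⟨huw, hn⟩
  lift u to {u : V // u ≠ v} using hu
  lift w to {w : V // w ≠ v} using hw
  rw [contractVertex_coe, contractVertex_coe]
  exact .inl huw

theorem reachable_map_apply (f : V → W) {u w : V} (h : G.Reachable u w) :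
    (G.map f).Reachable (f u) (f w) := by
  obtain ⟨p⟩ := h
  induction p with
  | nil => rfl
  | @cons u u' _ huu' _ ih =>
    obtain heq | hne := eq_or_ne (f u) (f u')
    · rwa [heq]
    · exact (map_adj_apply' huu' hne).reachable.trans ih

theorem connected_map_of_surjective (hG : G.Connected) {f : V → W}
    (hf : Function.Surjective f) : (G.map f).Connected where
  preconnected := hf.forall₂.2 fun u w ↦ reachable_map_apply f (hG.preconnected u w)
  nonempty := hG.nonempty.map f

theorem connected_kronReduction [Nontrivial V] (hG : G.Connected) (v : V) :
    (kronReduction G v).Connected := by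
  obtain ⟨n, hn⟩ := hG.preconnected.exists_adj_of_nontrivial v
  lift n to {u : V // u ≠ v} using hn.ne'
  exact (connected_map_of_surjective hG (contractVertex_surjective n)).mono
    (map_contractVertex_le_kronReduction hn.symm)

theorem not_reachable_induce_ne_of_isAcyclic (hG : G.IsAcyclic) {a b : {u : V // u ≠ v}}
    (hab : a ≠ b) (ha : G.Adj a v) (hb : G.Adj b v) :
    ¬ (G.induce {u | u ≠ v}).Reachable a b := by
  intro h
  have hbridge : ¬ (G.deleteEdges {s(a.1, v)}).Reachable a v :=
    isBridge_iff.mp (isAcyclic_iff_forall_adj_isBridge.mp hG ha)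
  have hle : G.deleteIncidenceSet v ≤ G.deleteEdges {s(a.1, v)} :=
    deleteEdges_anti (Set.singleton_subset_iff.mpr ((G.mk'_mem_incidenceSet_right_iff).mpr ha))
  have hreach : (G.deleteIncidenceSet v).Reachable a b := by
    rw [← G.induce_deleteIncidenceSet_of_notMem (x := v) (by simp)] at h
    exact h.map (Embedding.induce _).toHom
  have hbv : (G.deleteEdges {s(a.1, v)}).Adj b v := by
    simp [deleteEdges_adj, hb, b.2, Subtype.coe_ne_coe.mpr hab.symm]
  exact hbridge ((hreach.mono hle).trans hbv.reachable)

theorem kronReduction_le_induce (hv : (G.neighborSet v).Subsingleton) :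
    kronReduction G v ≤ G.induce {u | u ≠ v} := by
  rintro u w ⟨hne, huw | ⟨hu, hw⟩⟩
  · exact huw
  · exact absurd (Subtype.ext (hv hu.symm hw.symm)) hne

theorem kronReduction_le_induce_sup_edge {a b : {u : V // u ≠ v}}
    (hv : G.neighborSet v ⊆ {a.1, b.1}) :
    kronReduction G v ≤ G.induce {u | u ≠ v} ⊔ edge a b := by
  rintro u w ⟨hne, huw | ⟨hu, hw⟩⟩
  · exact .inl huw
  · have hu' : u = a ∨ u = b := by simpa [Subtype.ext_iff] using hv hu.symm
    have hw' : w = a ∨ w = b := by simpa [Subtype.ext_iff] using hv hw.symm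
    exact .inr ((edge_adj ..).mpr ⟨by grind, hne⟩)

theorem neighborSet_eq_pair_of_degree_le_two [Fintype (G.neighborSet v)] (hdeg : G.degree v ≤ 2)
    {a b : V} (hab : a ≠ b) (ha : G.Adj v a) (hb : G.Adj v b) : G.neighborSet v = {a, b} := by
  classical
  have hpair : {a, b} = G.neighborFinset v :=
    Finset.eq_of_subset_of_card_le (by simp [Finset.insert_subset_iff, ha, hb])
      (by rwa [Finset.card_pair hab, card_neighborFinset_eq_degree])
  rw [← coe_neighborFinset, ← hpair, Finset.coe_pair]

theorem isAcyclic_kronReduction [Fintype (G.neighborSet v)] (hG : G.IsAcyclic)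
    (hdeg : G.degree v ≤ 2) : (kronReduction G v).IsAcyclic := by
  have hforest : (G.induce {u | u ≠ v}).IsAcyclic := hG.induce _
  obtain hsub | ⟨a, ha, b, hb, hab⟩ := (G.neighborSet v).subsingleton_or_nontrivial
  · exact hforest.anti (kronReduction_le_induce hsub)
  · have hpair := neighborSet_eq_pair_of_degree_le_two hdeg hab ha hb
    lift a to {u : V // u ≠ v} using ha.ne'
    lift b to {u : V // u ≠ v} using hb.ne'
    have hsep := not_reachable_induce_ne_of_isAcyclic hG (Subtype.coe_ne_coe.mp hab) ha.symm hb.symm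
    exact (hforest.sup_edge_of_not_reachable hsep).anti
      (kronReduction_le_induce_sup_edge hpair.subset)

theorem kron_reduce_low_degree_vertex_tree_general [Nontrivial V] [Fintype (G.neighborSet v)]
    (hG : G.IsTree) (hdeg : G.degree v ≤ 2) : (kronReduction G v).IsTree :=
  ⟨connected_kronReduction hG.connected v, isAcyclic_kronReduction hG.isAcyclic hdeg⟩

end KronReduction

/-- **Kron reduction of a degree-≤2 vertex of a tree yields a tree.**
Let `G` be a finite tree with at least two vertices and `v` a vertex of degree
at most 2. The graph `G'` on the remaining vertices, in which `u, w` are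
adjacent iff `u ≠ w` and either they were adjacent in `G` or both were
adjacent to `v`, is again a tree. -/
theorem kron_reduce_low_degree_vertex_tree {V : Type} [Fintype V] [DecidableEq V]
    (G : SimpleGraph V) [DecidableRel G.Adj]
    (hG : G.IsTree) (hcard : 1 < Fintype.card V)
    (v : V) (hdeg : G.degree v ≤ 2)
    (G' : SimpleGraph {u : V // u ≠ v})
    (hG' : ∀ u w : {u : V // u ≠ v},
      G'.Adj u w ↔ u ≠ w ∧ (G.Adj u.1 w.1 ∨ (G.Adj u.1 v ∧ G.Adj w.1 v))) :
    G'.IsTree := by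
  have : Nontrivial V := Fintype.one_lt_card_iff_nontrivial.mp hcard
  obtain rfl : G' = kronReduction G v := by
    ext u w
    exact hG' u w
  exact kron_reduce_low_degree_vertex_tree_general hG hdeg
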